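/- arXiv:2411.02928 — 4 statements merged into one kernel-verified Lean document; each statement's English description precedes it below -/
import Mathlib

section
/- Let n be a positive natural number, let p be a real number with 0 ≤ p ≤ 1, and let r be a natural number with r < n and n·p ≤ r + 1. Then the upper tail of the binomial distribution satisfies ∑_{i=r+1}^{n} (n choose i) · p^i · (1-p)^{n-i} ≤ exp(-2·n·((r+1)/n - p)^2). -/
/-!
The proof is the Chernoff method. For `t ≥ 0`, every term with `i ≥ r + 1` is at most itself times
`exp (t * (i - (r + 1)))`; extending the sum to all `i ≤ n` and applying the binomial theorem
bounds the tail by `exp (-t * (r + 1)) * (p * exp t + (1 - p)) ^ n`. Hoeffding's lemma for a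
Bernoulli variable (`bernoulli_mgf_le`) bounds this by `exp (n * (t ^ 2 / 8 - t * d))` with
`d = (r + 1) / n - p`, and the optimal choice `t = 4 * d`, nonnegative because `n * p ≤ r + 1`,
gives the claim.
-/

open MeasureTheory ProbabilityTheory in
/-- Hoeffding's lemma for a Bernoulli variable, obtained from Mathlib's sub-Gaussian bound for the
identity under the measure `(1 - p) δ₀ + p δ₁` on `ℝ`. -/
lemma bernoulli_mgf_le (p : ℝ) (hp0 : 0 ≤ p) (hp1 : p ≤ 1) (t : ℝ) :
    p * Real.exp t + (1 - p) ≤ Real.exp (p * t + t ^ 2 / 8) := by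
  have hq : 0 ≤ 1 - p := sub_nonneg.2 hp1
  let μ : Measure ℝ :=
    ENNReal.ofReal (1 - p) • Measure.dirac 0 + ENNReal.ofReal p • Measure.dirac 1
  have hμ : IsProbabilityMeasure μ := ⟨by
    simp [μ, ← ENNReal.ofReal_add hq hp0]⟩
  have hint (f : ℝ → ℝ) : ∫ x, f x ∂μ = (1 - p) * f 0 + p * f 1 := by
    have hi (c a : ℝ) : Integrable f (ENNReal.ofReal c • Measure.dirac a) :=
      (integrable_dirac (by simp)).smul_measure ENNReal.ofReal_ne_top
    rw [integral_add_measure (hi _ _) (hi _ _)]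
    simp [integral_smul_measure, hp0, hq]
  have hb : ∀ᵐ x ∂μ, x ∈ Set.Icc (0 : ℝ) 1 := by
    rw [ae_add_measure_iff]
    constructor <;> refine Measure.ae_smul_measure ?_ _ <;>
      simp [ae_dirac_eq]
  have h := (hasSubgaussianMGF_of_mem_Icc (X := fun x => x) aemeasurable_id hb).mgf_le t
  simp only [mgf, hint] at h
  norm_num at h
  have e0 : Real.exp (p * t + t ^ 2 / 8) = Real.exp (p * t) * Real.exp (1 / 4 * t ^ 2 / 2) := by
    rw [← Real.exp_add]; ring_nf
  rw [e0]
  refine le_trans (le_of_eq ?_) (mul_le_mul_of_nonneg_left h (Real.exp_pos (p * t)).le)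
  have e1 : Real.exp (p * t) * Real.exp (-(t * p)) = 1 := by
    rw [← Real.exp_add]; simp [mul_comm]
  have e2 : Real.exp (p * t) * Real.exp (t * (1 - p)) = Real.exp t := by
    rw [← Real.exp_add]; ring_nf
  linear_combination -(1 - p) * e1 - p * e2

/-- Hoeffding bound on the upper tail of the binomial distribution:
if `0 < n`, `0 ≤ p ≤ 1`, `r < n` and `n·p ≤ r+1`, then
`∑_{i=r+1}^n (n choose i) p^i (1-p)^{n-i} ≤ exp(-2 n ((r+1)/n - p)^2)`. -/
theorem binomial_upper_tail_hoeffding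
    (n : ℕ) (hn : 0 < n) (p : ℝ) (hp0 : 0 ≤ p) (hp1 : p ≤ 1)
    (r : ℕ) (hr : r < n) (hnp : (n : ℝ) * p ≤ (r : ℝ) + 1) :
    ∑ i ∈ Finset.Icc (r + 1) n, (n.choose i : ℝ) * p ^ i * (1 - p) ^ (n - i)
      ≤ Real.exp (-2 * n * (((r : ℝ) + 1) / n - p) ^ 2) := by
  have hq : 0 ≤ 1 - p := sub_nonneg.2 hp1
  have hn' : (0 : ℝ) < n := by exact_mod_cast hn
  obtain ⟨d, hd⟩ : ∃ d, d = ((r : ℝ) + 1) / n - p := ⟨_, rfl⟩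
  have hd0 : 0 ≤ d := by
    rw [hd, sub_nonneg, le_div_iff₀ hn']; linarith
  have hrd : (r : ℝ) + 1 = n * (d + p) := by
    rw [hd]; field_simp; ring
  rw [← hd]
  calc ∑ i ∈ Finset.Icc (r + 1) n, (n.choose i : ℝ) * p ^ i * (1 - p) ^ (n - i)
      ≤ ∑ i ∈ Finset.Icc (r + 1) n, Real.exp (-(4 * d) * (r + 1)) *
          ((p * Real.exp (4 * d)) ^ i * (1 - p) ^ (n - i) * n.choose i) := by
        refine Finset.sum_le_sum fun i hi => ?_
        have hi' : (r : ℝ) + 1 ≤ i := by exact_mod_cast (Finset.mem_Icc.1 hi).1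
        have h1 : 1 ≤ Real.exp (-(4 * d) * (r + 1)) * Real.exp (4 * d) ^ i := by
          rw [← Real.exp_nat_mul, ← Real.exp_add]
          exact Real.one_le_exp (by nlinarith)
        calc _ ≤ (n.choose i : ℝ) * p ^ i * (1 - p) ^ (n - i) *
                (Real.exp (-(4 * d) * (r + 1)) * Real.exp (4 * d) ^ i) :=
              le_mul_of_one_le_right (by positivity) h1
          _ = _ := by rw [mul_pow]; ring
    _ ≤ ∑ i ∈ Finset.range (n + 1), Real.exp (-(4 * d) * (r + 1)) *
          ((p * Real.exp (4 * d)) ^ i * (1 - p) ^ (n - i) * n.choose i) := by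
        refine Finset.sum_le_sum_of_subset_of_nonneg (fun i hi => ?_) fun i _ _ => by positivity
        have := (Finset.mem_Icc.1 hi).2
        exact Finset.mem_range.2 (by omega)
    _ = Real.exp (-(4 * d) * (r + 1)) * (p * Real.exp (4 * d) + (1 - p)) ^ n := by
        rw [← Finset.mul_sum, add_pow]
    _ ≤ Real.exp (-(4 * d) * (r + 1)) * Real.exp (p * (4 * d) + (4 * d) ^ 2 / 8) ^ n := by
        gcongr
        exact bernoulli_mgf_le p hp0 hp1 _
    _ = Real.exp (-2 * n * d ^ 2) := by
        rw [← Real.exp_nat_mul, ← Real.exp_add, hrd]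
        ring_nf
end

section
/- Let G be a simple graph on a finite vertex type V. A vector σ : V → F₂ lies in the image of the F₂ edge-boundary map of G if and only if for every connected component c of G, the sum ∑_{v ∈ c} σ(v) equals 0 in F₂. -/
/-!
The boundary of a single edge `ab` is `δ_a + δ_b`, and `a`, `b` lie in the same component, so every
boundary has even parity on each component. Conversely, telescoping along a walk puts `δ_u + δ_v` in
the range whenever `u` and `v` are joined by a walk (`single_add_single_mem_range`). Fix a
representative `r v` of the component of each vertex `v`. Then `∑ v, σ v • (δ_v + δ_{r v})` is a
boundary, and it equals `σ` when `σ` has even parity on every component, because the coefficient of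
`δ_w` in `∑ v, σ v • δ_{r v}` is either an empty sum or the parity of `σ` on the component of `w`.
-/

open Finset

/-- The `F₂` edge-boundary map of a simple graph: it sends a function
`x : E(G) → F₂` to the function `V → F₂` whose value at `v` is the sum, over the
edges incident to `v`, of the values of `x`. -/
def edgeBoundary {V : Type*} [Fintype V] [DecidableEq V] (G : SimpleGraph V)
    [DecidableRel G.Adj] (x : G.edgeSet → ZMod 2) (v : V) : ZMod 2 :=
  ∑ e : G.edgeSet, if v ∈ (e : Sym2 V) then x e else 0

/-- `edgeBoundary G` as an `F₂`-linear map. -/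
def edgeBoundaryLinear {V : Type*} [Fintype V] [DecidableEq V] (G : SimpleGraph V)
    [DecidableRel G.Adj] : (G.edgeSet → ZMod 2) →ₗ[ZMod 2] (V → ZMod 2) where
  toFun := edgeBoundary G
  map_add' x y := by
    funext v
    simp only [edgeBoundary, Pi.add_apply, ← Finset.sum_add_distrib]
    refine Finset.sum_congr rfl fun e _ => ?_
    split_ifs <;> simp
  map_smul' a x := by
    funext v
    simp [edgeBoundary, Finset.mul_sum]

lemma edgeBoundary_single {V : Type*} [Fintype V] [DecidableEq V] (G : SimpleGraph V)
    [DecidableRel G.Adj] {a b : V} (h : G.Adj a b) :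
    edgeBoundary G (Pi.single ⟨s(a, b), h⟩ 1) = Pi.single a 1 + Pi.single b 1 := by
  funext v
  have hab := h.ne
  unfold edgeBoundary
  rw [Finset.sum_eq_single ⟨s(a, b), h⟩]
  · by_cases ha : v = a
    · subst ha
      simp [hab]
    · by_cases hb : v = b
      · subst hb
        simp [ha]
      · simp [ha, hb]
  · intro e _ he
    simp [he]
  · simp

lemma single_add_single_mem_range {V : Type*} [Fintype V] [DecidableEq V] (G : SimpleGraph V)
    [DecidableRel G.Adj] {u v : V} (p : G.Walk u v) :
    (Pi.single u 1 + Pi.single v 1 : V → ZMod 2) ∈ LinearMap.range (edgeBoundaryLinear G) := by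
  induction p with
  | nil =>
    rw [ZModModule.add_self]
    exact zero_mem _
  | @cons a b c h _ ih =>
    have hab : (Pi.single a 1 + Pi.single b 1 : V → ZMod 2) ∈
        LinearMap.range (edgeBoundaryLinear G) := ⟨_, edgeBoundary_single G h⟩
    have key : (Pi.single a 1 + Pi.single c 1 : V → ZMod 2) =
        (Pi.single a 1 + Pi.single b 1) + (Pi.single b 1 + Pi.single c 1) := by
      rw [add_assoc, ← add_assoc (Pi.single b 1), ZModModule.add_self, zero_add]
    rw [key]
    exact add_mem hab ih

/-- A vector `σ : V → F₂` lies in the image of the `F₂` edge-boundary map of a simple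
graph `G` iff its sum over every connected component of `G` vanishes. -/
theorem mem_range_edgeBoundary_iff_sum_components_eq_zero
    {V : Type*} [Fintype V] [DecidableEq V] (G : SimpleGraph V) [DecidableRel G.Adj]
    [DecidableEq G.ConnectedComponent] (σ : V → ZMod 2) :
    (∃ x : G.edgeSet → ZMod 2, edgeBoundary G x = σ) ↔
      ∀ c : G.ConnectedComponent,
        ∑ v : V, (if G.connectedComponentMk v = c then σ v else 0) = 0 := by
  constructor
  · rintro ⟨x, rfl⟩ c
    simp only [edgeBoundary, ← Finset.sum_filter]
    simp only [Finset.sum_filter _ (fun e : G.edgeSet => x e)]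
    rw [Finset.sum_comm]
    refine Finset.sum_eq_zero ?_
    rintro ⟨e, he⟩ -
    induction e with
    | _ a b =>
      have hab : G.Adj a b := he
      have hc : G.connectedComponentMk a = G.connectedComponentMk b :=
        SimpleGraph.ConnectedComponent.sound hab.reachable
      -- The endpoints `a ≠ b` contribute equally, hence cancel in characteristic two.
      have hsplit : ∀ v : V, (if v ∈ s(a, b) then x ⟨s(a, b), he⟩ else 0) =
          (if v = a then x ⟨s(a, b), he⟩ else 0) + (if v = b then x ⟨s(a, b), he⟩ else 0) := by
        intro v
        have := hab.ne
        by_cases ha : v = a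
        · subst ha
          simp [this]
        · simp [ha]
      simp only [hsplit, Finset.sum_add_distrib, Finset.sum_ite_eq', Finset.mem_filter,
        Finset.mem_univ, true_and, hc]
      exact CharTwo.add_self_eq_zero _
  · intro h
    have hout : ∀ v, G.connectedComponentMk (G.connectedComponentMk v).out =
        G.connectedComponentMk v := fun v => Quot.out_eq _
    suffices hσ : σ = ∑ v, σ v • (Pi.single v 1 +
        Pi.single (G.connectedComponentMk v).out 1 : V → ZMod 2) by
      have hmem : σ ∈ LinearMap.range (edgeBoundaryLinear G) := by
        rw [hσ]
        refine Submodule.sum_mem _ fun v _ => Submodule.smul_mem _ _ ?_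
        obtain ⟨p⟩ := SimpleGraph.ConnectedComponent.exact (hout v).symm
        exact single_add_single_mem_range G p
      exact hmem
    funext w
    simp only [Finset.sum_apply, Pi.smul_apply, Pi.add_apply, smul_eq_mul, mul_add,
      Finset.sum_add_distrib, Pi.single_apply, mul_ite, mul_one, mul_zero,
      Finset.sum_ite_eq, Finset.mem_univ, if_true]
    rw [left_eq_add]
    by_cases hw : w = (G.connectedComponentMk w).out
    · refine Eq.trans ?_ (h (G.connectedComponentMk w))
      refine Finset.sum_congr rfl fun v _ => if_congr ⟨fun e => ?_, fun e => ?_⟩ rfl rfl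
      · rw [e, hout]
      · rw [e, ← hw]
    · refine Finset.sum_eq_zero fun v _ => if_neg fun e => hw ?_
      have hv := hout v
      rw [← e] at hv
      rw [hv, ← e]
end

section
/- Let G be an acyclic simple graph (a forest) on a finite vertex type V. Then the F₂ edge-boundary map of G is injective. -/
/-!
In a forest every edge `e = uv` is a bridge, so it is the only edge leaving the set `S` of
vertices reachable from `u` in `G - e`. Summing the boundary `∂x` over `S` counts `x e` once and
every other `x e'` either zero or two times, so modulo 2 the sum equals `x e`
(`sum_edgeBoundary_eq`). Thus every `x e` can be recovered from `∂x`.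
-/

open Finset

/-- An edge contributes to the sum over `S` of the boundary exactly when one of its two endpoints
lies in `S` and the other does not. -/
lemma sum_ite_mem_edge {V : Type*} [DecidableEq V] (S : Finset V) {a b : V} (hab : a ≠ b)
    (c : ZMod 2) :
    (∑ w ∈ S, if w ∈ s(a, b) then c else 0) = if (a ∈ S ↔ b ∈ S) then 0 else c := by
  have h : ∀ w, (if w ∈ s(a, b) then c else 0)
      = (if w = a then c else 0) + (if w = b then c else 0) := by
    intro w
    by_cases h1 : w = a <;> by_cases h2 : w = b <;> simp_all
  simp only [h, Finset.sum_add_distrib, Finset.sum_ite_eq']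
  by_cases ha : a ∈ S <;> by_cases hb : b ∈ S <;> simp [ha, hb, CharTwo.add_self_eq_zero]

/-- If `e` is the only edge of `G` with exactly one endpoint in `S`, then the boundary of `x`
sums to `x e` over `S`. -/
lemma sum_edgeBoundary_eq {V : Type*} [Fintype V] [DecidableEq V] (G : SimpleGraph V)
    [DecidableRel G.Adj] (S : Finset V) {u v : V} (huv : G.Adj u v) (hu : u ∈ S) (hv : v ∉ S)
    (hS : ∀ a b, G.Adj a b → s(a, b) ≠ s(u, v) → (a ∈ S ↔ b ∈ S)) (x : G.edgeSet → ZMod 2) :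
    ∑ w ∈ S, edgeBoundary G x w = x ⟨s(u, v), huv⟩ := by
  unfold edgeBoundary
  rw [Finset.sum_comm, Finset.sum_eq_single (⟨s(u, v), huv⟩ : G.edgeSet)]
  · rw [sum_ite_mem_edge S huv.ne]
    simp [hu, hv]
  · rintro ⟨e, he⟩ - hne
    induction e using Sym2.ind with
    | _ a b =>
      have hadj : G.Adj a b := he
      rw [sum_ite_mem_edge S hadj.ne, if_pos]
      exact hS a b hadj fun h => hne (Subtype.ext h)
  · simp

/-- On a forest (acyclic simple graph), the `F₂` edge-boundary map is injective. -/
theorem edgeBoundary_injective_of_isAcyclic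
    {V : Type*} [Fintype V] [DecidableEq V] (G : SimpleGraph V) [DecidableRel G.Adj]
    (hG : G.IsAcyclic) :
    Function.Injective (edgeBoundary G) := by
  classical
  intro x y hxy
  funext ⟨e, he⟩
  induction e using Sym2.ind with
  | _ u v =>
    have huv : G.Adj u v := he
    have hbridge := SimpleGraph.isAcyclic_iff_forall_isBridge.mp hG he
    rw [SimpleGraph.isBridge_iff] at hbridge
    let S : Finset V := {w | (G.deleteEdges {s(u, v)}).Reachable u w}
    have hu : u ∈ S := by simp [S]
    have hv : v ∉ S := by simpa [S] using hbridge
    have hS : ∀ a b, G.Adj a b → s(a, b) ≠ s(u, v) → (a ∈ S ↔ b ∈ S) := by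
      intro a b hab hne
      have h : (G.deleteEdges {s(u, v)}).Adj a b :=
        SimpleGraph.deleteEdges_adj.mpr ⟨hab, hne⟩
      simp only [S, Finset.mem_filter, Finset.mem_univ, true_and]
      exact ⟨fun k => k.trans h.reachable, fun k => k.trans h.symm.reachable⟩
    rw [← sum_edgeBoundary_eq G S huv hu hv hS x, ← sum_edgeBoundary_eq G S huv hu hv hS y, hxy]
end

section
/- Let n ≥ 1 be a natural number, let ι be a type, and let φ : (Fin n → F₂) → (ι → F₂) be an F₂-linear map whose kernel is exactly the span of the all-ones vector 𝟙. If e : Fin n → F₂ satisfies 2·wt(e) < n, where wt denotes Hamming weight, then every x ≠ e with φ(x) = φ(e) satisfies wt(x) > wt(e); in particular, e is the unique minimum-weight vector with syndrome φ(e). -/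
/-! Two vectors with the same syndrome differ by an element of the kernel `{0, 𝟙}`, so a vector
`x ≠ e` with the syndrome of `e` is the complement `𝟙 + e`. Its weight is then `n - wt e`, which
exceeds `wt e` because `2 * wt e < n`. -/

open Finset

/-- The Hamming weight of a vector over `F₂`: the number of nonzero coordinates. -/
def hWeight {n : ℕ} (x : Fin n → ZMod 2) : ℕ :=
  (Finset.univ.filter fun i => x i ≠ 0).card

/-- Adding the all-ones vector complements the support, so the two weights add up to `n`. -/
theorem hWeight_add_hWeight_of_complement {n : ℕ} (x e : Fin n → ZMod 2)
    (h : ∀ i, x i = 1 + e i) : hWeight e + hWeight x = n := by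
  have hx : ∀ i, x i ≠ 0 ↔ ¬ e i ≠ 0 := by
    intro i
    rw [h i]
    generalize e i = a
    revert a
    decide
  unfold hWeight
  simp only [hx]
  rw [Finset.card_filter_add_card_filter_not, Finset.card_univ, Fintype.card_fin]

/-- Correctness of the minimum weight perfect matching decoder for the generalized
repetition code: if the kernel of the syndrome map `φ` is exactly the span of the
all-ones vector and `2·wt(e) < n`, then every other vector with the same syndrome has
strictly larger Hamming weight; in particular `e` is the unique minimum-weight vector
with syndrome `φ e`. -/
theorem repetition_code_mwpm_correct
    (n : ℕ) (hn : 1 ≤ n) (ι : Type*)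
    (φ : (Fin n → ZMod 2) →ₗ[ZMod 2] (ι → ZMod 2))
    (hker : LinearMap.ker φ = Submodule.span (ZMod 2) {fun _ => (1 : ZMod 2)})
    (e : Fin n → ZMod 2) (he : 2 * hWeight e < n) :
    ∀ x : Fin n → ZMod 2, x ≠ e → φ x = φ e → hWeight e < hWeight x := by
  intro x hxe hφ
  have hmem : x - e ∈ LinearMap.ker φ := by
    rw [LinearMap.mem_ker, map_sub, hφ, sub_self]
  rw [hker, Submodule.mem_span_singleton] at hmem
  obtain ⟨c, hc⟩ := hmem
  -- the scalar `c` is `0` or `1` in `F₂`, and `c = 0` would force `x = e`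
  have hc1 : c = 1 := by
    have hcases : ∀ a : ZMod 2, a = 0 ∨ a = 1 := by decide
    refine (hcases c).resolve_left fun h0 => hxe ?_
    rw [h0, zero_smul] at hc
    exact sub_eq_zero.mp hc.symm
  have hsum := hWeight_add_hWeight_of_complement x e fun i => by
    have hi := congrFun hc i
    simp only [hc1, one_smul, Pi.sub_apply] at hi
    exact (sub_eq_iff_eq_add.mp hi.symm)
  omega
end
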